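/- Claim (Gaussian-weighted L² bound for the heat kernel): Let (Γ, π, μ) be a weighted graph with controlled and uniformly lazy weights admitting a relative Faber-Krahn function of the form Λ(B(z,r), ν) = (a/r²)(F(z,r)/ν)^α for some positive function F and constants a, α > 0. For D > 0 define E_D(k, x) = ∑_{w ∈ Γ} p(k, x, w)² exp(ρ(x,w)²/(Dk)) π(w), where ρ(x,w) = max{1, d(x,w)}. Then there exist D₀ > 0 and, for each D ≥ D₀, a constant C(D) such that E_D(k, x) ≤ C(D)/F(x, √(2k)) for all x ∈ Γ and all integers k ≥ 1. -/

import Mathlib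

open scoped BigOperators

/-- Sum of a real-valued function over a set of vertices. -/
noncomputable def setSum {V : Type*} (A : Set V) (f : V → ℝ) : ℝ := ∑' y : A, f (y : V)

open Classical in
/-- The Markov kernel attached to vertex weights `pw` and edge weights `ew`. -/
noncomputable def mkernel {V : Type*} (pw : V → ℝ) (ew : V → V → ℝ) (x y : V) : ℝ :=
  if x = y then 1 - (∑' z, ew x z) / pw x else ew x y / pw x

open Classical in
/-- Iterates (convolution powers) of the Markov kernel. -/
noncomputable def mkernelPow {V : Type*} (pw : V → ℝ) (ew : V → V → ℝ) : ℕ → V → V → ℝ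
  | 0 => fun x y => if x = y then 1 else 0
  | n + 1 => fun x y => ∑' z, mkernel pw ew x z * mkernelPow pw ew n z y

/-- The heat kernel (transition density) of the random walk. -/
noncomputable def mheat {V : Type*} (pw : V → ℝ) (ew : V → V → ℝ) (n : ℕ) (x y : V) : ℝ :=
  mkernelPow pw ew n x y / pw y

/-- A weighted graph: a simple connected graph with symmetric, adapted edge weights
subordinate to positive vertex weights. -/
structure WeightedGraph (V : Type*) where
  G : SimpleGraph V
  wV : V → ℝ
  wE : V → V → ℝ
  wV_pos : ∀ x, 0 < wV x
  wE_nonneg : ∀ x y, 0 ≤ wE x y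
  wE_symm : ∀ x y, wE x y = wE y x
  adapted : ∀ x y, 0 < wE x y ↔ G.Adj x y
  connected : G.Connected
  wE_summable : ∀ x, Summable fun y => wE x y
  subordinate : ∀ x, (∑' y, wE x y) ≤ wV x

namespace WeightedGraph

variable {V : Type*}

/-- Controlled weights with constant `Cc`. -/
def Controlled (Γ : WeightedGraph V) (Cc : ℝ) : Prop :=
  1 < Cc ∧ ∀ x y, Γ.G.Adj x y → Γ.wV x ≤ Cc * Γ.wE x y

/-- Uniformly lazy weights with constant `Ce`. -/
def UniformlyLazy (Γ : WeightedGraph V) (Ce : ℝ) : Prop :=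
  Ce ∈ Set.Ioo (0 : ℝ) 1 ∧ ∀ x, (∑' y, Γ.wE x y) ≤ (1 - Ce) * Γ.wV x

/-- Closed ball for the graph distance. -/
noncomputable def ball (Γ : WeightedGraph V) (x : V) (r : ℝ) : Set V :=
  {y | (Γ.G.dist x y : ℝ) ≤ r}

/-- Volume of a ball. -/
noncomputable def vol (Γ : WeightedGraph V) (x : V) (r : ℝ) : ℝ :=
  setSum (Γ.ball x r) Γ.wV

/-- Dirichlet energy of a function. -/
noncomputable def energy (Γ : WeightedGraph V) (f : V → ℝ) : ℝ :=
  (∑' x, ∑' y, (f x - f y) ^ 2 * Γ.wE x y) / 2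

/-- Squared `L²`-norm of a function. -/
noncomputable def sqnorm (Γ : WeightedGraph V) (f : V → ℝ) : ℝ :=
  ∑' x, f x ^ 2 * Γ.wV x

/-- The first Dirichlet eigenvalue of a finite set `Ω`. -/
noncomputable def lambda1 (Γ : WeightedGraph V) (Ω : Finset V) : ℝ :=
  sInf {q | ∃ f : V → ℝ, f ≠ 0 ∧ (∀ x, f x ≠ 0 → x ∈ Ω) ∧ q = Γ.energy f / Γ.sqnorm f}

/-- `Λ` is a relative Faber-Krahn function of `Γ`: for balls `B(z,r)` the map
`ν ↦ Λ z r ν` is non-increasing, and `λ₁(Ω) ≥ Λ(B, π(Ω))` for nonempty finite `Ω ⊆ B`. -/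
def IsRelFK (Γ : WeightedGraph V) (Λ : V → ℝ → ℝ → ℝ) : Prop :=
  (∀ z r ν₁ ν₂, 0 < ν₁ → ν₁ ≤ ν₂ → Λ z r ν₂ ≤ Λ z r ν₁) ∧
  ∀ z : V, ∀ r : ℝ, ∀ Ω : Finset V, Ω.Nonempty → (∀ x ∈ Ω, x ∈ Γ.ball z r) →
    Λ z r (∑ x ∈ Ω, Γ.wV x) ≤ Γ.lambda1 Ω

/-- The heat kernel of the weighted graph. -/
noncomputable def heatKernel (Γ : WeightedGraph V) : ℕ → V → V → ℝ :=
  mheat Γ.wV Γ.wE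

/-- `ε`-average of a function over closed balls of radius `ε`. -/
noncomputable def avg (Γ : WeightedGraph V) (ε : ℝ) (f : V → ℝ) (x : V) : ℝ :=
  setSum (Γ.ball x ε) (fun y => f y * Γ.wV y) / Γ.vol x ε

/-- `Φ` is a quasi-isometry between weighted graphs with constants `ε, a, b, Cq`. -/
structure IsQI {V₁ V₂ : Type*} (Γ₁ : WeightedGraph V₁) (Γ₂ : WeightedGraph V₂)
    (Φ : V₁ → V₂) (ε a b Cq : ℝ) : Prop where
  eps_pos : 0 < ε
  a_pos : 0 < a
  b_nonneg : 0 ≤ b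
  Cq_pos : 0 < Cq
  dense : ∀ z : V₂, ∃ x : V₁, (Γ₂.G.dist (Φ x) z : ℝ) ≤ ε
  dist_lower : ∀ x y : V₁, a⁻¹ * (Γ₁.G.dist x y : ℝ) - b ≤ (Γ₂.G.dist (Φ x) (Φ y) : ℝ)
  dist_upper : ∀ x y : V₁, (Γ₂.G.dist (Φ x) (Φ y) : ℝ) ≤ a * (Γ₁.G.dist x y : ℝ)
  weight_lower : ∀ x, Cq⁻¹ * Γ₁.wV x ≤ Γ₂.wV (Φ x)
  weight_upper : ∀ x, Γ₂.wV (Φ x) ≤ Cq * Γ₁.wV x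

end WeightedGraph

/-- Decay lemma for a discrete differential inequality. -/
lemma ode_decay (J : ℕ → ℝ) (l c M : ℝ) (n : ℕ) (hn : 1 ≤ n) (hl : 0 < l) (hc : 0 ≤ c)
    (hM : 0 ≤ M) (h0 : J 0 ≤ M)
    (hstep : ∀ i, i < n → J (i + 1) ≤ J i - l * J i + c)
    (hl1 : ∀ i, i ≤ n → J i ≠ 0 → l ≤ 1) : J n ≤ M / (l * n) + c / l := by
  have hn' : (0 : ℝ) < n := by exact_mod_cast hn
  by_cases hl2 : l ≤ 1
  · have key : ∀ i, i ≤ n → (J i - c / l) * (1 + i * l) ≤ M := by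
      intro i
      induction i with
      | zero =>
        intro _
        have : 0 ≤ c / l := by positivity
        simp
        linarith
      | succ i ih =>
        intro hi
        have h1 := ih (by omega)
        have h2 := hstep i (by omega)
        have hcl : c / l * l = c := by field_simp
        have h3 : J (i + 1) - c / l ≤ (1 - l) * (J i - c / l) := by nlinarith
        push_cast
        have hp : 0 ≤ (i : ℝ) := by positivity
        have h4 : 0 ≤ 1 + ((i : ℝ) + 1) * l := by positivity
        have h5 := mul_le_mul_of_nonneg_right h3 h4
        refine h5.trans ?_
        by_cases h6 : 0 ≤ J i - c / l
        · have h7 : (1 - l) * (1 + ((i : ℝ) + 1) * l) ≤ 1 + i * l := by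
            nlinarith [mul_nonneg hp (mul_nonneg hl.le hl.le), mul_nonneg hl.le hl.le]
          nlinarith [mul_le_mul_of_nonneg_left h7 h6]
        · push Not at h6
          have h8 : 0 ≤ (1 - l) * (1 + ((i : ℝ) + 1) * l) := mul_nonneg (by linarith) h4
          nlinarith
    have h := key n le_rfl
    by_cases h6 : 0 ≤ J n - c / l
    · have : J n - c / l ≤ M / (l * n) := by
        rw [le_div_iff₀ (by positivity)]
        nlinarith
      linarith
    · have : 0 ≤ M / (l * n) := by positivity
      linarith
  · have : J n = 0 := by
      by_contra h
      exact hl2 (hl1 n le_rfl h)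
    rw [this]
    positivity

section abstractgraph

variable {V : Type*}

lemma sum_symm_half (S : Finset V) (m : V → V → ℝ) (hs : ∀ x y, m x y = m y x)
    (H : V → V → ℝ) :
    ∑ x ∈ S, ∑ y ∈ S, m x y * H x y = ∑ x ∈ S, ∑ y ∈ S, m x y * ((H x y + H y x) / 2) := by
  have h1 : ∑ x ∈ S, ∑ y ∈ S, m x y * H x y = ∑ x ∈ S, ∑ y ∈ S, m x y * H y x := by
    rw [Finset.sum_comm]
    refine Finset.sum_congr rfl fun x _ => Finset.sum_congr rfl fun y _ => ?_
    rw [hs]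
  have h2 : ∑ x ∈ S, ∑ y ∈ S, m x y * ((H x y + H y x) / 2)
      = (∑ x ∈ S, ∑ y ∈ S, m x y * H x y + ∑ x ∈ S, ∑ y ∈ S, m x y * H y x) / 2 := by
    rw [← Finset.sum_add_distrib, Finset.sum_div]
    refine Finset.sum_congr rfl fun x _ => ?_
    rw [← Finset.sum_add_distrib, Finset.sum_div]
    refine Finset.sum_congr rfl fun y _ => ?_
    ring
  rw [h2, ← h1]
  ring

/-- One step energy inequality. -/
lemma step_energy (S : Finset V) (m : V → V → ℝ) (p : V → ℝ) (e : ℝ)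
    (hs : ∀ x y, m x y = m y x) (hm : ∀ x y, 0 ≤ m x y) (hp : ∀ x, 0 < p x)
    (hrow : ∀ x, ∑ y ∈ S, m x y ≤ (1 - e) * p x)
    (v w g : V → ℝ) (hg : ∀ x, 0 ≤ g x)
    (hw : ∀ x ∈ S, w x = v x + (∑ y ∈ S, m x y * (v y - v x)) / p x) :
    ∑ x ∈ S, w x ^ 2 * g x * p x ≤ ∑ x ∈ S, v x ^ 2 * g x * p x
      + ∑ x ∈ S, ∑ y ∈ S, m x y * (-e * (v x - v y) ^ 2 * ((g x + g y) / 2)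
          - (v x ^ 2 - v y ^ 2) * (g x - g y) / 2) := by
  have hpt : ∀ x ∈ S, w x ^ 2 * g x * p x ≤ v x ^ 2 * g x * p x
      + ∑ y ∈ S, m x y * (2 * v x * g x * (v y - v x) + (1 - e) * g x * (v y - v x) ^ 2) := by
    intro x hx
    rw [hw x hx]
    set D := ∑ y ∈ S, m x y * (v y - v x) with hD
    set Q := ∑ y ∈ S, m x y * (v y - v x) ^ 2 with hQ
    have hsplit : ∑ y ∈ S, m x y * (2 * v x * g x * (v y - v x)
        + (1 - e) * g x * (v y - v x) ^ 2) = 2 * v x * g x * D + (1 - e) * g x * Q := by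
      rw [hD, hQ, Finset.mul_sum, Finset.mul_sum, ← Finset.sum_add_distrib]
      refine Finset.sum_congr rfl fun y _ => by ring
    have hQ0 : 0 ≤ Q := Finset.sum_nonneg fun y _ => mul_nonneg (hm x y) (sq_nonneg _)
    have hCS : D ^ 2 ≤ (∑ y ∈ S, m x y) * Q := by
      have := Finset.sum_sq_le_sum_mul_sum_of_sq_le_mul S (r := fun y => m x y * (v y - v x))
        (f := fun y => m x y) (g := fun y => m x y * (v y - v x) ^ 2)
        (fun y _ => hm x y) (fun y _ => mul_nonneg (hm x y) (sq_nonneg _))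
        (fun y _ => le_of_eq (by ring))
      exact this
    have hCS2 : D ^ 2 ≤ (1 - e) * p x * Q :=
      hCS.trans (mul_le_mul_of_nonneg_right (hrow x) hQ0)
    have hpx := hp x
    have h1 : D ^ 2 / p x ≤ (1 - e) * Q := by
      rw [div_le_iff₀ hpx]; linarith
    have h2 : (v x + D / p x) ^ 2 * g x * p x
        = v x ^ 2 * g x * p x + 2 * v x * g x * D + g x * (D ^ 2 / p x) := by
      field_simp
      ring
    rw [h2, hsplit]
    nlinarith [mul_le_mul_of_nonneg_left h1 (hg x)]
  refine (Finset.sum_le_sum hpt).trans ?_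
  rw [Finset.sum_add_distrib]
  gcongr 1
  rw [sum_symm_half S m hs]
  apply le_of_eq
  refine Finset.sum_congr rfl fun x _ => Finset.sum_congr rfl fun y _ => ?_
  ring

lemma sum_sq_sym_le (S : Finset V) (m : V → V → ℝ) (hs : ∀ x y, m x y = m y x)
    (b : V → V → ℝ) (hb : ∀ x y, b x y = b y x) (v : V → ℝ) :
    ∑ x ∈ S, ∑ y ∈ S, m x y * ((v x ^ 2 + v y ^ 2) * b x y)
      = 2 * ∑ x ∈ S, v x ^ 2 * ∑ y ∈ S, m x y * b x y := by
  have h := sum_symm_half S m hs (fun x y => 2 * v x ^ 2 * b x y)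
  rw [Finset.mul_sum]
  have h2 : ∑ x ∈ S, ∑ y ∈ S, m x y * (2 * v x ^ 2 * b x y)
      = ∑ x ∈ S, 2 * (v x ^ 2 * ∑ y ∈ S, m x y * b x y) := by
    refine Finset.sum_congr rfl fun x _ => ?_
    rw [Finset.mul_sum, Finset.mul_sum]
    refine Finset.sum_congr rfl fun y _ => by ring
  rw [← h2, h]
  refine Finset.sum_congr rfl fun x _ => Finset.sum_congr rfl fun y _ => ?_
  rw [hb y x]
  ring

/-- Integrated maximum principle, one step. -/
lemma step_max (S : Finset V) (m : V → V → ℝ) (p : V → ℝ) (e : ℝ) (he : 0 < e)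
    (hs : ∀ x y, m x y = m y x) (hm : ∀ x y, 0 ≤ m x y) (hp : ∀ x, 0 < p x)
    (hrow : ∀ x, ∑ y ∈ S, m x y ≤ (1 - e) * p x)
    (v w g g0 β : V → ℝ) (hg : ∀ x, 0 < g x)
    (hw : ∀ x ∈ S, w x = v x + (∑ y ∈ S, m x y * (v y - v x)) / p x)
    (hβ0 : ∀ x, 0 ≤ β x)
    (hβ : ∀ x ∈ S, v x ≠ 0 → ∀ y ∈ S, m x y ≠ 0 →
      (g x - g y) ^ 2 / (g x + g y) ≤ 2 * β x * g x)
    (hgg : ∀ x ∈ S, v x ≠ 0 → g x * (1 + β x / e) ≤ g0 x) :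
    ∑ x ∈ S, w x ^ 2 * g x * p x ≤ ∑ x ∈ S, v x ^ 2 * g0 x * p x := by
  have h1 := step_energy S m p e hs hm hp hrow v w g (fun x => (hg x).le) hw
  refine h1.trans ?_
  have h2 : ∑ x ∈ S, ∑ y ∈ S, m x y * (-e * (v x - v y) ^ 2 * ((g x + g y) / 2)
          - (v x ^ 2 - v y ^ 2) * (g x - g y) / 2)
      ≤ ∑ x ∈ S, ∑ y ∈ S, m x y * ((v x ^ 2 + v y ^ 2) *
          ((g x - g y) ^ 2 / (g x + g y) / (4 * e))) := by
    refine Finset.sum_le_sum fun x _ => Finset.sum_le_sum fun y _ =>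
      mul_le_mul_of_nonneg_left ?_ (hm x y)
    have hG : 0 < g x + g y := add_pos (hg x) (hg y)
    set G := g x + g y with hGd
    set A := v x - v y with hA
    set B := v x + v y with hB
    set d := g x - g y with hd
    have e1 : (v x ^ 2 - v y ^ 2) = A * B := by rw [hA, hB]; ring
    have e2 : B ^ 2 ≤ 2 * (v x ^ 2 + v y ^ 2) := by
      rw [hB]; nlinarith [sq_nonneg (v x - v y)]
    have e3 : -e * A ^ 2 * (G / 2) - A * B * d / 2 ≤ B ^ 2 * (d ^ 2 / G / (8 * e)) := by
      have : B ^ 2 * (d ^ 2 / G / (8 * e)) - (-e * A ^ 2 * (G / 2) - A * B * d / 2)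
        = (2 * e * A * G + B * d) ^ 2 / (8 * e * G) := by
          field_simp
          ring
      have h3 : 0 ≤ (2 * e * A * G + B * d) ^ 2 / (8 * e * G) := by positivity
      linarith
    rw [e1]
    refine e3.trans ?_
    have e4 : 0 ≤ d ^ 2 / G / (8 * e) := by positivity
    have e5 : d ^ 2 / G / (4 * e) = 2 * (d ^ 2 / G / (8 * e)) := by field_simp; ring
    rw [e5]
    nlinarith [mul_le_mul_of_nonneg_right e2 e4]
  rw [sum_sq_sym_le S m hs _ (fun x y => by rw [add_comm (g x)]; ring)] at h2
  rw [Finset.mul_sum] at h2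
  refine (add_le_add_right h2 _).trans ?_
  rw [← Finset.sum_add_distrib]
  refine Finset.sum_le_sum fun x hx => ?_
  by_cases hv : v x = 0
  · simp [hv]
  have h3 : ∑ y ∈ S, m x y * ((g x - g y) ^ 2 / (g x + g y) / (4 * e))
      ≤ ∑ y ∈ S, m x y * (2 * β x * g x / (4 * e)) := by
    refine Finset.sum_le_sum fun y hy => ?_
    by_cases hmy : m x y = 0
    · simp [hmy]
    · refine mul_le_mul_of_nonneg_left ?_ (hm x y)
      gcongr
      exact hβ x hx hv y hy hmy
  rw [← Finset.sum_mul] at h3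
  have hgx := hg x
  have hbx := hβ0 x
  have hpx := hp x
  have h4 : (∑ y ∈ S, m x y) * (2 * β x * g x / (4 * e)) ≤ p x * (2 * β x * g x / (4 * e)) := by
    refine mul_le_mul_of_nonneg_right ((hrow x).trans ?_) (by positivity)
    nlinarith
  have h5 := mul_le_mul_of_nonneg_left (h3.trans h4) (sq_nonneg (v x))
  have h6 := mul_le_mul_of_nonneg_left (hgg x hx hv) (mul_nonneg (sq_nonneg (v x)) hpx.le)
  have h7 : v x ^ 2 * g x * p x + 2 * (v x ^ 2 * (p x * (2 * β x * g x / (4 * e))))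
     = v x ^ 2 * p x * (g x * (1 + β x / e)) := by field_simp; ring
  nlinarith

lemma cacc_scalar (e : ℝ) (he : 0 < e) (he1 : e < 1) (a b c f : ℝ) :
    (-e * (a - b) ^ 2 * ((c ^ 2 + f ^ 2) / 2) - (a ^ 2 - b ^ 2) * (c ^ 2 - f ^ 2) / 2)
      ≤ ((a ^ 2 + b ^ 2) * (2 / e * (c - f) ^ 2)) - e / 4 * ((a * c - b * f) ^ 2) := by
  set A := a - b with hA
  set B := a + b with hB
  set d := c - f with hd
  set H := (c + f) / 2 with hH
  have e1 : (a ^ 2 - b ^ 2) * (c ^ 2 - f ^ 2) / 2 = A * B * d * H := by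
    rw [hA, hB, hd, hH]; ring
  have e2 : H ^ 2 ≤ (c ^ 2 + f ^ 2) / 2 := by
    rw [hH]; nlinarith [sq_nonneg (c - f)]
  have e3 : a * c - b * f = A * H + B * d / 2 := by
    rw [hA, hB, hd, hH]; ring
  have e4 : (a ^ 2 + b ^ 2) * (2 / e * d ^ 2) ≥ 1 / e * (B * d) ^ 2 := by
    have : B ^ 2 ≤ 2 * (a ^ 2 + b ^ 2) := by
      rw [hB]; nlinarith [sq_nonneg (a - b)]
    have h6 : 0 ≤ 1 / e * d ^ 2 := by positivity
    have h7 := mul_le_mul_of_nonneg_left this h6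
    have h8 : (a ^ 2 + b ^ 2) * (2 / e * d ^ 2)
      = 1 / e * d ^ 2 * (2 * (a ^ 2 + b ^ 2)) := by ring
    rw [h8]; linarith
  rw [e1, e3]
  have e5 : -e * A ^ 2 * ((c ^ 2 + f ^ 2) / 2) ≤ -e * A ^ 2 * H ^ 2 := by
    have : 0 ≤ e * A ^ 2 := by positivity
    nlinarith [mul_le_mul_of_nonneg_left e2 this]
  set X := A * H with hX
  set Y := B * d with hY
  have e6 : -e * X ^ 2 - X * Y ≤ 1 / e * Y ^ 2 - e / 4 * (X + Y / 2) ^ 2 := by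
    have e7 : (X + Y / 2) ^ 2 ≤ 2 * X ^ 2 + Y ^ 2 / 2 := by nlinarith [sq_nonneg (X - Y / 2)]
    have e8 : -(e / 2) * X ^ 2 - X * Y ≤ 1 / (2 * e) * Y ^ 2 := by
      have : 1 / (2 * e) * Y ^ 2 - (-(e / 2) * X ^ 2 - X * Y)
        = (e * X + Y) ^ 2 / (2 * e) := by field_simp; ring
      have : 0 ≤ (e * X + Y) ^ 2 / (2 * e) := by positivity
      linarith
    have e9 : e / 8 ≤ 1 / (2 * e) := by
      rw [div_le_div_iff₀ (by norm_num) (by positivity)]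
      nlinarith
    have e10 : 1 / e * Y ^ 2 = 1 / (2 * e) * Y ^ 2 + 1 / (2 * e) * Y ^ 2 := by
      field_simp; ring
    rw [e10]
    have e11 := mul_le_mul_of_nonneg_right e9 (sq_nonneg Y)
    have e12 := mul_le_mul_of_nonneg_left e7 he.le
    linarith
  calc _ ≤ -e * A ^ 2 * H ^ 2 - A * B * d * H := by linarith
    _ = -e * X ^ 2 - X * Y := by rw [hX, hY]; ring
    _ ≤ 1 / e * Y ^ 2 - e / 4 * (X + Y / 2) ^ 2 := e6
    _ ≤ _ := by linarith

/-- Caccioppoli inequality, one step. -/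
lemma step_cacc (S : Finset V) (m : V → V → ℝ) (p : V → ℝ) (e : ℝ) (he : 0 < e) (he1 : e < 1)
    (hs : ∀ x y, m x y = m y x) (hm : ∀ x y, 0 ≤ m x y) (hp : ∀ x, 0 < p x)
    (hrow : ∀ x, ∑ y ∈ S, m x y ≤ (1 - e) * p x)
    (v w h : V → ℝ)
    (hw : ∀ x ∈ S, w x = v x + (∑ y ∈ S, m x y * (v y - v x)) / p x)
    (Q : V → Prop) [DecidablePred Q] (L : ℝ)
    (hL : ∀ x ∈ S, ∀ y ∈ S, m x y ≠ 0 → (h x - h y) ^ 2 ≤ L ^ 2)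
    (hQ : ∀ x ∈ S, ∀ y ∈ S, m x y ≠ 0 → ¬ Q x → h x = h y) :
    ∑ x ∈ S, (w x * h x) ^ 2 * p x ≤ ∑ x ∈ S, (v x * h x) ^ 2 * p x
      - e / 2 * ((∑ x ∈ S, ∑ y ∈ S, (v x * h x - v y * h y) ^ 2 * m x y) / 2)
      + 4 / e * L ^ 2 * ∑ x ∈ S with Q x, v x ^ 2 * p x := by
  have h1 := step_energy S m p e hs hm hp hrow v w (fun x => h x ^ 2) (fun x => sq_nonneg _) hw
  have h2 : ∑ x ∈ S, ∑ y ∈ S, m x y * (-e * (v x - v y) ^ 2 * ((h x ^ 2 + h y ^ 2) / 2)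
          - (v x ^ 2 - v y ^ 2) * (h x ^ 2 - h y ^ 2) / 2)
      ≤ ∑ x ∈ S, ∑ y ∈ S, (m x y * ((v x ^ 2 + v y ^ 2) * (2 / e * (h x - h y) ^ 2))
          - e / 4 * ((v x * h x - v y * h y) ^ 2 * m x y)) := by
    refine Finset.sum_le_sum fun x _ => Finset.sum_le_sum fun y _ => ?_
    have key := cacc_scalar e he he1 (v x) (v y) (h x) (h y)
    have := mul_le_mul_of_nonneg_left key (hm x y)
    linarith
  simp only [Finset.sum_sub_distrib] at h2
  rw [sum_sq_sym_le S m hs _ (fun x y => by ring)] at h2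
  simp only [← Finset.mul_sum] at h2
  have h3 : ∑ x ∈ S, v x ^ 2 * ∑ y ∈ S, m x y * (2 / e * (h x - h y) ^ 2)
      ≤ ∑ x ∈ S with Q x, v x ^ 2 * p x * (2 / e * L ^ 2) := by
    rw [Finset.sum_filter]
    refine Finset.sum_le_sum fun x hx => ?_
    split_ifs with hq
    · have : ∑ y ∈ S, m x y * (2 / e * (h x - h y) ^ 2) ≤ ∑ y ∈ S, m x y * (2 / e * L ^ 2) := by
        refine Finset.sum_le_sum fun y hy => ?_
        by_cases hmy : m x y = 0
        · simp [hmy]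
        refine mul_le_mul_of_nonneg_left ?_ (hm x y)
        exact mul_le_mul_of_nonneg_left (hL x hx y hy hmy) (by positivity)
      rw [← Finset.sum_mul] at this
      have h4 : (∑ y ∈ S, m x y) * (2 / e * L ^ 2) ≤ p x * (2 / e * L ^ 2) := by
        refine mul_le_mul_of_nonneg_right ((hrow x).trans ?_) (by positivity)
        nlinarith [hp x]
      rw [mul_assoc]
      exact mul_le_mul_of_nonneg_left (this.trans h4) (sq_nonneg _)
    · have : ∑ y ∈ S, m x y * (2 / e * (h x - h y) ^ 2) = 0 := by
        refine Finset.sum_eq_zero fun y hy => ?_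
        by_cases hmy : m x y = 0
        · simp [hmy]
        rw [hQ x hx y hy hmy hq]; simp
      rw [this]; simp
  rw [← Finset.sum_mul] at h3
  simp only [mul_pow]
  have h5 : 2 * ((∑ x ∈ S with Q x, v x ^ 2 * p x) * (2 / e * L ^ 2))
    = 4 / e * L ^ 2 * ∑ x ∈ S with Q x, v x ^ 2 * p x := by ring
  linarith

lemma energy_le_two (S : Finset V) (m : V → V → ℝ) (p : V → ℝ) (e : ℝ) (he : 0 < e)
    (hs : ∀ x y, m x y = m y x) (hm : ∀ x y, 0 ≤ m x y) (hp : ∀ x, 0 < p x)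
    (hrow : ∀ x, ∑ y ∈ S, m x y ≤ (1 - e) * p x) (f : V → ℝ) :
    (∑ x ∈ S, ∑ y ∈ S, (f x - f y) ^ 2 * m x y) / 2 ≤ 2 * ∑ x ∈ S, f x ^ 2 * p x := by
  have h1 : ∑ x ∈ S, ∑ y ∈ S, (f x - f y) ^ 2 * m x y
      ≤ ∑ x ∈ S, ∑ y ∈ S, m x y * ((f x ^ 2 + f y ^ 2) * 2) := by
    refine Finset.sum_le_sum fun x _ => Finset.sum_le_sum fun y _ => ?_
    have : (f x - f y) ^ 2 ≤ (f x ^ 2 + f y ^ 2) * 2 := by nlinarith [sq_nonneg (f x + f y)]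
    nlinarith [mul_le_mul_of_nonneg_left this (hm x y)]
  rw [sum_sq_sym_le S m hs (fun _ _ => 2) (fun _ _ => rfl)] at h1
  have h2 : ∑ x ∈ S, f x ^ 2 * ∑ y ∈ S, m x y * 2 ≤ ∑ x ∈ S, 2 * (f x ^ 2 * p x) := by
    refine Finset.sum_le_sum fun x _ => ?_
    rw [← Finset.sum_mul]
    have : ∑ y ∈ S, m x y ≤ p x := (hrow x).trans (by nlinarith [hp x])
    nlinarith [mul_le_mul_of_nonneg_left this (sq_nonneg (f x))]
  rw [← Finset.mul_sum] at h2
  linarith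

end abstractgraph

section abstractgraph2

variable {V : Type*}

open Classical in
lemma degiorgi_step (S : Finset V) (m : V → V → ℝ) (p : V → ℝ) (e : ℝ) (he : 0 < e) (he1 : e < 1)
    (hs : ∀ x y, m x y = m y x) (hm : ∀ x y, 0 ≤ m x y) (hp : ∀ x, 0 < p x)
    (hrow : ∀ x, ∑ y ∈ S, m x y ≤ (1 - e) * p x)
    (d : V → ℝ) (hd : ∀ x y, m x y ≠ 0 → |d x - d y| ≤ 1)
    (u : ℕ → V → ℝ) (k : ℕ)
    (hu : ∀ s, s < k → ∀ z ∈ S, u (s + 1) z = u s z + (∑ y ∈ S, m z y * (u s y - u s z)) / p z)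
    (R R' L t t' N ν Λ : ℝ)
    (hFK : ∀ f : V → ℝ, (∀ z, f z ≠ 0 → d z ≤ R) → (∑ z ∈ S with f z ≠ 0, p z ≤ ν) →
      Λ * ∑ z ∈ S, f z ^ 2 * p z ≤ (∑ x ∈ S, ∑ y ∈ S, (f x - f y) ^ 2 * m x y) / 2)
    (hΛ : 0 < Λ) (ht : t < t') (hν : N ≤ ν * (t' - t) ^ 2) (hL0 : 0 < L)
    (hL : 1 ≤ (R - 1 - R') * L)
    (s0 n : ℕ) (hn : 1 ≤ n) (hk : s0 + n ≤ k)
    (hN : ∀ i, i ≤ n → ∑ z ∈ S with d z ≤ R, (max (u (s0 + i) z - t) 0) ^ 2 * p z ≤ N) :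
    ∑ z ∈ S with d z ≤ R', (max (u (s0 + n) z - t') 0) ^ 2 * p z
      ≤ N / ((e / 2 * Λ) * n) + (4 / e * L ^ 2 * N) / (e / 2 * Λ) := by
  set h : V → ℝ := fun z => max 0 (min 1 ((R - 1 - d z) * L)) with hh
  set v : ℕ → V → ℝ := fun i z => max (u (s0 + i) z - t') 0 with hv
  set J : ℕ → ℝ := fun i => ∑ z ∈ S, (v i z * h z) ^ 2 * p z with hJ
  have hh0 : ∀ z, 0 ≤ h z := fun z => le_max_left _ _
  have hh1 : ∀ z, h z ≤ 1 := fun z => max_le zero_le_one (min_le_left _ _)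
  have hhz : ∀ z, R - 1 ≤ d z → h z = 0 := by
    intro z hz
    have : (R - 1 - d z) * L ≤ 0 := mul_nonpos_of_nonpos_of_nonneg (by linarith) hL0.le
    simp only [hh]
    exact max_eq_left ((min_le_right _ _).trans this)
  have hho : ∀ z, d z ≤ R' → h z = 1 := by
    intro z hz
    have : 1 ≤ (R - 1 - d z) * L := hL.trans (by gcongr)
    simp only [hh]
    rw [min_eq_left this]
    exact max_eq_right zero_le_one
  have hhL : ∀ x y, m x y ≠ 0 → (h x - h y) ^ 2 ≤ L ^ 2 := by
    intro x y hxy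
    have h1 : |h x - h y| ≤ |(R - 1 - d x) * L - (R - 1 - d y) * L| := by
      simp only [hh]
      refine (abs_max_sub_max_le_max _ _ _ _).trans ?_
      rw [sub_self, abs_zero, max_eq_right (abs_nonneg _)]
      refine (abs_min_sub_min_le_max _ _ _ _).trans ?_
      simp
    have h2 : |(R - 1 - d x) * L - (R - 1 - d y) * L| ≤ L := by
      have : (R - 1 - d x) * L - (R - 1 - d y) * L = -((d x - d y) * L) := by ring
      rw [this, abs_neg, abs_mul, abs_of_pos hL0]
      nlinarith [hd x y hxy]
    exact sq_le_sq' (by linarith [neg_abs_le (h x - h y)]) (by linarith [le_abs_self (h x - h y)])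
  have hv0 : ∀ i z, 0 ≤ v i z := fun i z => le_max_right _ _
  have hvle : ∀ i z, v i z ≤ max (u (s0 + i) z - t) 0 := fun i z =>
    max_le_max (by linarith) le_rfl
  have hfk : ∀ i, i ≤ n → Λ * J i ≤
      (∑ x ∈ S, ∑ y ∈ S, (v i x * h x - v i y * h y) ^ 2 * m x y) / 2 := by
    intro i hi
    refine hFK (fun z => v i z * h z) ?_ ?_
    · intro z hz
      by_contra hc
      push Not at hc
      exact hz (by simp [hhz z (by linarith)])
    · have hpos : 0 < (t' - t) ^ 2 := by have : 0 < t' - t := by linarith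
                                         positivity
      refine le_of_mul_le_mul_right (le_trans ?_ ((hN i hi).trans hν)) hpos
      rw [Finset.sum_mul]
      have hsub : (S.filter fun z => v i z * h z ≠ 0) ⊆ S.filter fun z => d z ≤ R := by
        intro z hz
        rw [Finset.mem_filter] at hz ⊢
        refine ⟨hz.1, ?_⟩
        by_contra hc
        push Not at hc
        exact hz.2 (by simp [hhz z (by linarith)])
      refine le_trans ?_ (Finset.sum_le_sum_of_subset_of_nonneg hsub
        (fun z _ _ => mul_nonneg (sq_nonneg _) (hp z).le))
      refine Finset.sum_le_sum fun z hz => ?_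
      rw [Finset.mem_filter] at hz
      have hvz : v i z ≠ 0 := fun h0 => hz.2 (by simp [h0])
      have h1 : t' < u (s0 + i) z := by
        by_contra hc
        push Not at hc
        exact hvz (max_eq_right (by linarith))
      have h2 : (t' - t) ^ 2 ≤ (max (u (s0 + i) z - t) 0) ^ 2 := by
        have : t' - t ≤ max (u (s0 + i) z - t) 0 := le_max_of_le_left (by linarith)
        exact pow_le_pow_left₀ (by linarith) this 2
      nlinarith [mul_le_mul_of_nonneg_right h2 (hp z).le]
  have hJnn : ∀ i, 0 ≤ J i := fun i => Finset.sum_nonneg fun z _ =>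
    mul_nonneg (sq_nonneg _) (hp z).le
  have hQN : ∀ i, i ≤ n → ∑ z ∈ S with d z ≤ R, v i z ^ 2 * p z ≤ N := by
    intro i hi
    refine le_trans (Finset.sum_le_sum fun z _ => ?_) (hN i hi)
    exact mul_le_mul_of_nonneg_right (pow_le_pow_left₀ (hv0 i z) (hvle i z) 2) (hp z).le
  have hN0 : 0 ≤ N := le_trans (Finset.sum_nonneg fun z _ =>
    mul_nonneg (sq_nonneg _) (hp z).le) (hQN 0 (Nat.zero_le _))
  have hstep : ∀ i, i < n → J (i + 1) ≤ J i - (e / 2 * Λ) * J i + 4 / e * L ^ 2 * N := by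
    intro i hi
    set w : V → ℝ := fun z => v i z + (∑ y ∈ S, m z y * (v i y - v i z)) / p z with hw
    have hc := step_cacc S m p e he he1 hs hm hp hrow (v i) w h (fun x _ => rfl)
      (fun z => d z ≤ R) L (fun x _ y _ hxy => hhL x y hxy) (by
        intro x _ y _ hxy hx
        push Not at hx
        have := hd x y hxy
        rw [abs_le] at this
        rw [hhz x (by linarith), hhz y (by linarith)])
    have hvw : ∀ z ∈ S, v (i + 1) z ≤ w z := by
      intro z hz
      have hpz := hp z
      have hwe : ∀ f : V → ℝ, f z + (∑ y ∈ S, m z y * (f y - f z)) / p z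
          = (1 - (∑ y ∈ S, m z y) / p z) * f z + (∑ y ∈ S, m z y * f y) / p z := by
        intro f
        have : ∑ y ∈ S, m z y * (f y - f z) = ∑ y ∈ S, m z y * f y - (∑ y ∈ S, m z y) * f z := by
          rw [Finset.sum_mul, ← Finset.sum_sub_distrib]
          exact Finset.sum_congr rfl fun y _ => by ring
        rw [this]
        ring
      have hc0 : 0 ≤ 1 - (∑ y ∈ S, m z y) / p z := by
        have : (∑ y ∈ S, m z y) / p z ≤ 1 := by
          rw [div_le_one hpz]
          exact (hrow z).trans (by nlinarith)
        linarith
      have hmono : ∀ f g : V → ℝ, (∀ y, f y ≤ g y) →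
          f z + (∑ y ∈ S, m z y * (f y - f z)) / p z
            ≤ g z + (∑ y ∈ S, m z y * (g y - g z)) / p z := by
        intro f g hfg
        rw [hwe f, hwe g]
        refine add_le_add (mul_le_mul_of_nonneg_left (hfg z) hc0) ?_
        refine div_le_div_of_nonneg_right ?_ hpz.le
        exact Finset.sum_le_sum fun y _ => mul_le_mul_of_nonneg_left (hfg y) (hm z y)
      refine max_le ?_ ?_
      · have h1 := hmono (fun y => u (s0 + i) y - t') (v i) (fun y => le_max_left _ _)
        have h2 := hu (s0 + i) (by omega) z hz
        rw [show s0 + (i + 1) = s0 + i + 1 from rfl, h2]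
        refine le_trans (le_of_eq ?_) h1
        simp only [sub_sub_sub_cancel_right]
        ring
      · have h1 := hmono (fun _ => 0) (v i) (hv0 i)
        simpa using h1
    have hJw : J (i + 1) ≤ ∑ z ∈ S, (w z * h z) ^ 2 * p z := by
      refine Finset.sum_le_sum fun z hz => ?_
      refine mul_le_mul_of_nonneg_right ?_ (hp z).le
      refine pow_le_pow_left₀ (mul_nonneg (hv0 _ z) (hh0 z)) ?_ 2
      exact mul_le_mul_of_nonneg_right (hvw z hz) (hh0 z)
    have h3 := mul_le_mul_of_nonneg_left (hfk i hi.le) (show 0 ≤ e / 2 by positivity)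
    have h4 := mul_le_mul_of_nonneg_left (hQN i hi.le) (show 0 ≤ 4 / e * L ^ 2 by positivity)
    have h5 : J i = ∑ z ∈ S, (v i z * h z) ^ 2 * p z := rfl
    linarith
  have hl1 : ∀ i, i ≤ n → J i ≠ 0 → e / 2 * Λ ≤ 1 := by
    intro i hi hne
    have hpos : 0 < J i := lt_of_le_of_ne (hJnn i) (Ne.symm hne)
    have h1 := energy_le_two S m p e he hs hm hp hrow (fun z => v i z * h z)
    have h2 := (hfk i hi).trans h1
    have h3 : Λ ≤ 2 := le_of_mul_le_mul_right h2 hpos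
    nlinarith
  have hJ0 : J 0 ≤ N := by
    refine le_trans ?_ (hQN 0 (Nat.zero_le _))
    rw [Finset.sum_filter]
    refine Finset.sum_le_sum fun z _ => ?_
    split_ifs with hz
    · refine mul_le_mul_of_nonneg_right ?_ (hp z).le
      refine pow_le_pow_left₀ (mul_nonneg (hv0 _ z) (hh0 z)) ?_ 2
      nlinarith [hv0 0 z, hh1 z]
    · push Not at hz
      simp [hhz z (by linarith)]
  have hfin := ode_decay J (e / 2 * Λ) (4 / e * L ^ 2 * N) N n hn (by positivity) (by positivity)
    hN0 hJ0 hstep hl1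
  refine le_trans ?_ hfin
  rw [Finset.sum_filter]
  refine Finset.sum_le_sum fun z _ => ?_
  split_ifs with hz
  · rw [hho z hz, mul_one]
  · exact mul_nonneg (sq_nonneg _) (hp z).le

end abstractgraph2

section abstractgraph3

variable {V : Type*}

set_option maxHeartbeats 4000000 in
open Classical in
/-- Mean value inequality. -/
lemma mean_value (m : V → V → ℝ) (p : V → ℝ) (e a α : ℝ) (he : 0 < e) (he1 : e < 1)
    (ha : 0 < a) (hα : 0 < α)
    (hs : ∀ x y, m x y = m y x) (hm : ∀ x y, 0 ≤ m x y) (hp : ∀ x, 0 < p x) :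
    ∃ C : ℝ, 0 < C ∧ ∀ (S : Finset V) (_ : ∀ x, ∑ y ∈ S, m x y ≤ (1 - e) * p x)
      (d : V → ℝ) (_ : ∀ x y, m x y ≠ 0 → |d x - d y| ≤ 1)
      (u : ℕ → V → ℝ) (k : ℕ) (_ : 1 ≤ k)
      (_ : ∀ s, s < k → ∀ z ∈ S, u (s + 1) z = u s z + (∑ y ∈ S, m z y * (u s y - u s z)) / p z)
      (r F M : ℝ) (_ : 0 < r) (_ : r ^ 2 = 2 * k) (_ : 0 < F) (_ : 0 < M)
      (_ : ∀ ν, 0 < ν → ∀ f : V → ℝ, (∀ z, f z ≠ 0 → d z ≤ r) →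
        (∑ z ∈ S with f z ≠ 0, p z ≤ ν) → (a / r ^ 2 * (F / ν) ^ α) * ∑ z ∈ S, f z ^ 2 * p z
          ≤ (∑ x ∈ S, ∑ y ∈ S, (f x - f y) ^ 2 * m x y) / 2)
      (_ : ∀ s, s ≤ k → ∑ z ∈ S with d z ≤ r, (u s z) ^ 2 * p z ≤ M)
      (x : V) (_ : x ∈ S) (_ : d x ≤ 0) (_ : 0 ≤ u k x),
      u k x ^ 2 ≤ C * M / F := by
  set B : ℝ := (1 / 4 : ℝ) ^ (1 / α) with hB
  have hB0 : 0 < B := by positivity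
  have hBα : B ^ α = 1 / 4 := by
    rw [hB, ← Real.rpow_mul (by norm_num), one_div_mul_cancel hα.ne', Real.rpow_one]
  set A : ℝ := (16 / e + 512 / e ^ 2) / (B / 4) with hA
  have hA0 : 0 < A := by positivity
  set c4 : ℝ := (a / A) ^ (1 / α) with hc4
  have hc40 : 0 < c4 := by positivity
  have hc4α : c4 ^ α = a / A := by
    rw [hc4, ← Real.rpow_mul (by positivity), one_div_mul_cancel hα.ne', Real.rpow_one]
  set C1 : ℝ := (128 / a) ^ (1 / α) with hC1
  have hC10 : 0 < C1 := by positivity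
  refine ⟨2 * (4 / c4) + 2 * C1, by positivity, ?_⟩
  intro S hrow d hd u k hk hu r F M hr hr2 hF hM hFK hMs x hx hdx hux
  have hk' : (1 : ℝ) ≤ k := by exact_mod_cast hk
  set t : ℝ := Real.sqrt (4 * M / (c4 * F)) with ht
  have ht2 : t ^ 2 = 4 * M / (c4 * F) := Real.sq_sqrt (by positivity)
  have ht0 : 0 < t := Real.sqrt_pos.mpr (by positivity)
  -- the iteration
  have hiter : ∀ j : ℕ, (∀ i, i < j → 8 * (2 : ℝ) ^ i ≤ r) →
      ∀ s : ℕ, (k : ℝ) * (1 - 1 / 2 ^ j) ≤ s → s ≤ k →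
        ∑ z ∈ S with d z ≤ r * (1 + 1 / 2 ^ j) / 2,
          (max (u s z - t * (1 - 1 / 2 ^ j)) 0) ^ 2 * p z ≤ (B / 4) ^ j * M := by
    intro j
    induction j with
    | zero =>
      intro _ s _ hsk
      have h1 := hMs s hsk
      simp only [pow_zero, div_one, sub_self, mul_zero, sub_zero, one_mul]
      rw [show r * (1 + 1) / 2 = r by ring]
      refine le_trans (Finset.sum_le_sum fun z _ => ?_) h1
      refine mul_le_mul_of_nonneg_right ?_ (hp z).le
      rcases le_total (u s z) 0 with h | h
      · rw [max_eq_right h, zero_pow two_ne_zero]; exact sq_nonneg _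
      · rw [max_eq_left h]
    | succ j ih =>
      intro hj s hs1 hs2
      have hP := ih (fun i hi => hj i (by omega))
      have hrT := hj j (by omega)
      rw [pow_succ] at hs1
      rw [pow_succ, pow_succ]
      have hT1 : (1 : ℝ) ≤ 2 ^ j := one_le_pow₀ (by norm_num)
      have hT4 : (4 : ℝ) ^ j = 2 ^ j * 2 ^ j := by rw [← mul_pow]; norm_num
      set T : ℝ := 2 ^ j with hT
      have hT0 : 0 < T := by linarith
      set N : ℝ := (B / 4) ^ j * M with hN
      have hN0 : 0 < N := by positivity
      set τ : ℝ := k / (2 * T) with hτ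
      have hτr : τ = r ^ 2 / (4 * T) := by rw [hr2, hτ]; field_simp; ring
      have hτ1 : 1 ≤ τ := by
        rw [hτr, le_div_iff₀ (by positivity)]
        nlinarith
      set n : ℕ := ⌊τ⌋₊ with hn
      have hn1 : 1 ≤ n := by
        rw [hn]; exact Nat.le_floor (by exact_mod_cast hτ1)
      have hnle : (n : ℝ) ≤ τ := Nat.floor_le (by linarith)
      have hnge : τ / 2 ≤ n := by
        have h1 : τ < n + 1 := Nat.lt_floor_add_one τ
        have h2 : (1 : ℝ) ≤ n := by exact_mod_cast hn1
        linarith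
      have hkT : (k : ℝ) * (1 - 1 / (T * 2)) = k - τ := by rw [hτ]; field_simp
      have hkT2 : (k : ℝ) * (1 - 1 / T) = k - 2 * τ := by rw [hτ]; field_simp
      rw [hkT] at hs1
      have hτk : 2 * τ ≤ k := by
        rw [hτ, ← mul_div_assoc, div_le_iff₀ (by positivity)]
        nlinarith
      have hns : n ≤ s := by
        have : (n : ℝ) ≤ s := by linarith
        exact_mod_cast this
      obtain ⟨s0, rfl⟩ : ∃ s0, s = s0 + n := ⟨s - n, by omega⟩
      push_cast at hs1
      set δ : ℝ := t / (2 * T) with hδ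
      have hδ0 : 0 < δ := by positivity
      set ν : ℝ := N / δ ^ 2 with hν
      have hν0 : 0 < ν := by positivity
      have hFν : F / ν = 1 / (c4 * B ^ j) := by
        rw [hν, hδ, div_pow, ht2, hN, div_pow, hT4]
        field_simp
        ring
      have hΛ : a / r ^ 2 * (F / ν) ^ α = A * T ^ 2 / r ^ 2 := by
        have h1 : (c4 * B ^ j) ^ α = a / A * (1 / 4) ^ j := by
          rw [Real.mul_rpow hc40.le (by positivity), hc4α, ← Real.rpow_natCast B j,
            ← Real.rpow_mul hB0.le, mul_comm (j : ℝ) α, Real.rpow_mul hB0.le, hBα,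
            Real.rpow_natCast]
        rw [hFν, Real.div_rpow zero_le_one (by positivity), Real.one_rpow, h1, one_div_pow, hT4]
        field_simp
      have hΛ0 : 0 < A * T ^ 2 / r ^ 2 := by positivity
      have hD := degiorgi_step S m p e he he1 hs hm hp hrow d hd u k hu
        (r * (1 + 1 / T) / 2) (r * (1 + 1 / (T * 2)) / 2) (8 * T / r)
        (t * (1 - 1 / T)) (t * (1 - 1 / (T * 2))) N ν (A * T ^ 2 / r ^ 2)
        (by
          intro f hf hfν
          rw [← hΛ]
          refine hFK ν hν0 f (fun z hz => (hf z hz).trans ?_) hfν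
          have : 1 / T ≤ 1 := by rw [div_le_one hT0]; exact hT1
          nlinarith)
        hΛ0
        (by
          have : t * (1 - 1 / (T * 2)) - t * (1 - 1 / T) = δ := by rw [hδ]; field_simp; ring
          linarith)
        (by
          have : t * (1 - 1 / (T * 2)) - t * (1 - 1 / T) = δ := by rw [hδ]; field_simp; ring
          rw [this, hν]
          apply le_of_eq
          field_simp)
        (by positivity)
        (by
          have h1 : (r * (1 + 1 / T) / 2 - 1 - r * (1 + 1 / (T * 2)) / 2) * (8 * T / r)
            = 2 - 8 * T / r := by field_simp; ring
          have h2 : 8 * T / r ≤ 1 := by rw [div_le_one hr]; exact hrT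
          linarith)
        s0 n hn1 hs2
        (by
          intro i hi
          refine hP (s0 + i) ?_ (by omega)
          rw [hkT2]
          push_cast
          have : (0 : ℝ) ≤ i := by positivity
          linarith)
      refine hD.trans ?_
      have hn0 : (0 : ℝ) < n := by exact_mod_cast hn1
      have h1 : N / (e / 2 * (A * T ^ 2 / r ^ 2) * n) ≤ N * (16 / e / A) := by
        have hnn : r ^ 2 / (8 * T) ≤ n := by
          refine le_trans (le_of_eq ?_) hnge
          rw [hτr]; field_simp; ring
        rw [div_le_iff₀ (by positivity)]
        have h2 : N * (16 / e / A) * (e / 2 * (A * T ^ 2 / r ^ 2) * n)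
          = N * T * (n * (8 * T / r ^ 2)) := by field_simp; ring
        rw [h2]
        have h3 : 1 ≤ n * (8 * T / r ^ 2) := by
          rw [div_le_iff₀ (by positivity)] at hnn
          rw [mul_div_assoc', le_div_iff₀ (by positivity)]
          linarith
        calc N = N * 1 * 1 := by ring
          _ ≤ N * T * (n * (8 * T / r ^ 2)) := by gcongr
      have h2 : 4 / e * (8 * T / r) ^ 2 * N / (e / 2 * (A * T ^ 2 / r ^ 2))
          = N * (512 / e ^ 2 / A) := by
        field_simp; ring
      rw [h2]
      have h3 : (B / 4) ^ j * (B / 4) * M = N * (16 / e / A) + N * (512 / e ^ 2 / A) := by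
        have h4 : (16 / e + 512 / e ^ 2) / A = B / 4 := by
          rw [hA]; field_simp
        have h5 : (B / 4) ^ j * (B / 4) * M = N * (B / 4) := by rw [hN]; ring
        rw [h5, ← h4]; ring
      rw [h3]
      linarith
  -- conclusion
  have hex : ∃ j : ℕ, r < 8 * 2 ^ j := by
    obtain ⟨j, hj⟩ := pow_unbounded_of_one_lt r (by norm_num : (1 : ℝ) < 2)
    exact ⟨j, by linarith⟩
  set J := Nat.find hex with hJ
  have hJ1 : r < 8 * 2 ^ J := Nat.find_spec hex
  have hJ2 : ∀ i, i < J → 8 * (2 : ℝ) ^ i ≤ r := fun i hi => by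
    have := Nat.find_min hex hi
    push Not at this
    exact this
  have hfin := hiter J hJ2 k (by
    have : (0 : ℝ) ≤ 1 / 2 ^ J := by positivity
    nlinarith) le_rfl
  have hpx := hp x
  have hsing : (max (u k x - t * (1 - 1 / 2 ^ J)) 0) ^ 2 * p x ≤ (B / 4) ^ J * M := by
    refine le_trans ?_ hfin
    refine Finset.single_le_sum
      (f := fun z => (max (u k z - t * (1 - 1 / 2 ^ J)) 0) ^ 2 * p z)
      (fun z _ => mul_nonneg (sq_nonneg _) (hp z).le) ?_
    rw [Finset.mem_filter]
    exact ⟨hx, hdx.trans (by positivity)⟩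
  have hFp : a / r ^ 2 * (F / p x) ^ α ≤ 2 := by
    have h1 := hFK (p x) hpx (fun z => if z = x then 1 else 0) (by
      intro z hz
      have : z = x := by by_contra hc; exact hz (by simp [hc])
      rw [this]; linarith) (by
      have : (S.filter fun z => (if z = x then (1 : ℝ) else 0) ≠ 0) = {x} := by
        ext z
        simp only [Finset.mem_filter, Finset.mem_singleton, ne_eq, ite_eq_right_iff,
          one_ne_zero, imp_false, not_not]
        exact ⟨fun h => h.2, fun h => ⟨h ▸ hx, h⟩⟩
      rw [this, Finset.sum_singleton])
    have h2 := h1.trans (energy_le_two S m p e he hs hm hp hrow _)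
    refine le_of_mul_le_mul_right h2 ?_
    have : ∑ z ∈ S, (if z = x then (1 : ℝ) else 0) ^ 2 * p z = p x := by
      simp [hx]
    rw [this]; exact hpx
  have hC : (B / 4) ^ J * (F / p x) ≤ C1 := by
    have h0 : (B / 4) ^ J ≤ B ^ J := pow_le_pow_left₀ (by positivity) (by linarith) J
    have hFp0 : 0 < F / p x := by positivity
    refine (mul_le_mul_of_nonneg_right h0 hFp0.le).trans ?_
    have h1 : (B ^ J * (F / p x)) ^ α ≤ 128 / a := by
      rw [Real.mul_rpow (by positivity) hFp0.le, ← Real.rpow_natCast B J,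
            ← Real.rpow_mul hB0.le, mul_comm (J : ℝ) α, Real.rpow_mul hB0.le, hBα,
            Real.rpow_natCast]
      have h2 : (F / p x) ^ α ≤ 2 * r ^ 2 / a := by
        rw [le_div_iff₀ ha]
        rw [div_mul_eq_mul_div, div_le_iff₀ (by positivity)] at hFp
        linarith
      have h3 : r ^ 2 ≤ 64 * 4 ^ J := by
        have h5 : (4 : ℝ) ^ J = 2 ^ J * 2 ^ J := by rw [← mul_pow]; norm_num
        rw [h5]
        nlinarith
      calc (1 / 4 : ℝ) ^ J * (F / p x) ^ α ≤ (1 / 4 : ℝ) ^ J * (2 * (64 * 4 ^ J) / a) := by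
            gcongr
            exact h2.trans (by gcongr)
        _ = 128 / a := by rw [one_div_pow]; field_simp; norm_num
    have h2 := Real.rpow_le_rpow (by positivity) h1 (show 0 ≤ 1 / α by positivity)
    rwa [← Real.rpow_mul (by positivity), mul_one_div_cancel hα.ne', Real.rpow_one] at h2
  set W := max (u k x - t * (1 - 1 / 2 ^ J)) 0 with hW
  have hW2 : W ^ 2 ≤ C1 * M / F := by
    rw [le_div_iff₀ hF]
    have h1 : W ^ 2 * F = W ^ 2 * p x * (F / p x) := by field_simp
    rw [h1]
    calc W ^ 2 * p x * (F / p x) ≤ (B / 4) ^ J * M * (F / p x) := by gcongr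
      _ = (B / 4) ^ J * (F / p x) * M := by ring
      _ ≤ C1 * M := by gcongr
  have huW : u k x ≤ t + W := by
    have h1 : u k x - t * (1 - 1 / 2 ^ J) ≤ W := le_max_left _ _
    have h2 : 0 ≤ t * (1 / 2 ^ J) := by positivity
    linarith
  have hW0 : 0 ≤ W := le_max_right _ _
  calc u k x ^ 2 ≤ (t + W) ^ 2 := pow_le_pow_left₀ hux huW 2
    _ ≤ 2 * t ^ 2 + 2 * W ^ 2 := by nlinarith [sq_nonneg (t - W)]
    _ ≤ 2 * (4 * M / (c4 * F)) + 2 * (C1 * M / F) := by rw [ht2]; linarith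
    _ = (2 * (4 / c4) + 2 * C1) * M / F := by field_simp

end abstractgraph3

lemma gauss_scalar1 (D T a b : ℝ) (hD : 6 ≤ D) (hT : 1 ≤ T) (ha : 1 ≤ a) (haT : a ≤ 2 * T)
    (hab : |a - b| ≤ 1) :
    (Real.exp (-(a ^ 2 / (D * T))) - Real.exp (-(b ^ 2 / (D * T)))) ^ 2
      / (Real.exp (-(a ^ 2 / (D * T))) + Real.exp (-(b ^ 2 / (D * T))))
      ≤ 2 * (18 * a ^ 2 / (D ^ 2 * T ^ 2)) * Real.exp (-(a ^ 2 / (D * T))) := by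
  set X := Real.exp (-(a ^ 2 / (D * T))) with hX
  set z := (a ^ 2 - b ^ 2) / (D * T) with hz
  have hX0 : 0 < X := Real.exp_pos _
  have hDT : 0 < D * T := by positivity
  have hY : Real.exp (-(b ^ 2 / (D * T))) = X * Real.exp z := by
    rw [hX, hz, ← Real.exp_add]; congr 1; ring
  rw [hY]
  have hzb : |z| ≤ 3 * a / (D * T) := by
    rw [hz, abs_div, abs_of_pos hDT]
    gcongr
    rw [abs_le] at hab
    rw [abs_le]
    constructor <;> nlinarith
  have hz1 : |z| ≤ 1 := by
    refine hzb.trans ?_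
    rw [div_le_one hDT]
    nlinarith
  have h1 := Real.abs_exp_sub_one_le hz1
  have h2 : (Real.exp z - 1) ^ 2 ≤ (2 * (3 * a / (D * T))) ^ 2 := by
    rw [← sq_abs]
    exact pow_le_pow_left₀ (abs_nonneg _) (by linarith) 2
  have h3 : (X - X * Real.exp z) ^ 2 / (X + X * Real.exp z) ≤ (X - X * Real.exp z) ^ 2 / X := by
    apply div_le_div_of_nonneg_left (sq_nonneg _) hX0
    have := Real.exp_pos z
    nlinarith
  refine h3.trans ?_
  have h4 : (X - X * Real.exp z) ^ 2 / X = (Real.exp z - 1) ^ 2 * X := by field_simp; ring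
  rw [h4]
  refine mul_le_mul_of_nonneg_right (h2.trans (le_of_eq ?_)) hX0.le
  field_simp
  ring

lemma gauss_scalar2 (D T a e : ℝ) (he : 0 < e) (hD : D = 36 / e) (hT : 1 ≤ T) :
    Real.exp (-(a ^ 2 / (D * T))) * (1 + (18 * a ^ 2 / (D ^ 2 * T ^ 2)) / e)
      ≤ Real.exp (-(a ^ 2 / (D * (T + 1)))) := by
  have hD0 : 0 < D := by rw [hD]; positivity
  set y := a ^ 2 / (D * T) - a ^ 2 / (D * (T + 1)) with hy
  have h1 : Real.exp (-(a ^ 2 / (D * (T + 1)))) = Real.exp (-(a ^ 2 / (D * T))) * Real.exp y := by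
    rw [← Real.exp_add]; congr 1; rw [hy]; ring
  rw [h1]
  refine mul_le_mul_of_nonneg_left ?_ (Real.exp_pos _).le
  have h2 : y = a ^ 2 / (D * (T * (T + 1))) := by
    rw [hy]; field_simp; ring
  have h3 : (18 * a ^ 2 / (D ^ 2 * T ^ 2)) / e = a ^ 2 / (D * (2 * T ^ 2)) := by
    have : D * e = 36 := by rw [hD]; field_simp
    rw [div_div, div_eq_div_iff (by positivity) (by positivity)]
    linear_combination (-(a ^ 2 * D * T ^ 2)) * this
  have h4 : a ^ 2 / (D * (2 * T ^ 2)) ≤ y := by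
    rw [h2]
    apply div_le_div_of_nonneg_left (sq_nonneg _) (by positivity)
    apply mul_le_mul_of_nonneg_left _ hD0.le
    nlinarith
  rw [h3]
  have := Real.add_one_le_exp y
  linarith

namespace WeightedGraph

variable {V : Type*} (Γ : WeightedGraph V)

lemma wE_self (x : V) : Γ.wE x x = 0 := by
  by_contra h
  have : 0 < Γ.wE x x := lt_of_le_of_ne (Γ.wE_nonneg x x) (Ne.symm h)
  exact Γ.G.irrefl ((Γ.adapted x x).1 this)

lemma adj_of_wE {x y : V} (h : Γ.wE x y ≠ 0) : Γ.G.Adj x y :=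
  (Γ.adapted x y).1 (lt_of_le_of_ne (Γ.wE_nonneg x y) (Ne.symm h))

lemma dist_le_one_of_wE {x y : V} (h : Γ.wE x y ≠ 0) : Γ.G.dist x y ≤ 1 :=
  (SimpleGraph.dist_eq_one_iff_adj.2 (Γ.adj_of_wE h)).le

lemma nbr_finite {Cc : ℝ} (hctrl : Γ.Controlled Cc) (x : V) : {y | Γ.wE x y ≠ 0}.Finite := by
  have h := (Γ.wE_summable x).tendsto_cofinite_zero
  have hCc : 0 < Cc := by linarith [hctrl.1]
  have hpos : 0 < Γ.wV x / Cc := div_pos (Γ.wV_pos x) hCc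
  have h2 := h.eventually (gt_mem_nhds hpos)
  rw [Filter.eventually_cofinite] at h2
  refine h2.subset fun y hy => ?_
  have := hctrl.2 x y (Γ.adj_of_wE hy)
  simp only [Set.mem_ofPred_eq, not_lt]
  rw [div_le_iff₀ hCc]
  linarith

lemma ball_finite {Cc : ℝ} (hctrl : Γ.Controlled Cc) (x : V) (n : ℕ) :
    {y | Γ.G.dist x y ≤ n}.Finite := by
  induction n with
  | zero =>
    refine (Set.finite_singleton x).subset fun y hy => ?_
    simp only [Set.mem_ofPred_eq, nonpos_iff_eq_zero] at hy
    rw [Γ.connected.dist_eq_zero_iff] at hy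
    exact hy.symm
  | succ n ih =>
    refine (ih.union (ih.biUnion fun z _ => Γ.nbr_finite hctrl z)).subset fun y hy => ?_
    simp only [Set.mem_ofPred_eq] at hy
    by_cases hc : Γ.G.dist x y ≤ n
    · exact Or.inl hc
    right
    obtain ⟨w, hw⟩ := Γ.connected.exists_walk_length_eq_dist y x
    rw [SimpleGraph.dist_comm] at hw
    cases w with
    | nil => exact absurd (by simp) hc
    | @cons _ z _ hadj w' =>
      simp only [SimpleGraph.Walk.length_cons] at hw
      have h1 : Γ.G.dist z x ≤ w'.length := SimpleGraph.dist_le w'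
      simp only [Set.mem_iUnion]
      refine ⟨z, ?_, ?_⟩
      · simp only [Set.mem_ofPred_eq]
        rw [SimpleGraph.dist_comm]; omega
      · simp only [Set.mem_ofPred_eq]
        exact ((Γ.adapted z y).2 hadj.symm).ne'

lemma mkernel_nonneg (x y : V) : 0 ≤ mkernel Γ.wV Γ.wE x y := by
  unfold mkernel
  split_ifs
  · have : (∑' z, Γ.wE x z) / Γ.wV x ≤ 1 := by
      rw [div_le_one (Γ.wV_pos x)]; exact Γ.subordinate x
    linarith
  · exact div_nonneg (Γ.wE_nonneg _ _) (Γ.wV_pos x).le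

lemma mkernel_ne {x y : V} (h : mkernel Γ.wV Γ.wE x y ≠ 0) : x = y ∨ Γ.wE x y ≠ 0 := by
  unfold mkernel at h
  split_ifs at h with hxy
  · exact Or.inl hxy
  · right
    intro h0
    exact h (by simp [h0])

lemma mkernel_dist {x y : V} (h : mkernel Γ.wV Γ.wE x y ≠ 0) : Γ.G.dist x y ≤ 1 := by
  rcases Γ.mkernel_ne h with rfl | h
  · simp
  · exact Γ.dist_le_one_of_wE h

lemma mkernel_finite {Cc : ℝ} (hctrl : Γ.Controlled Cc) (x : V) :
    {y | mkernel Γ.wV Γ.wE x y ≠ 0}.Finite := by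
  refine ((Set.finite_singleton x).union (Γ.nbr_finite hctrl x)).subset fun y hy => ?_
  rcases Γ.mkernel_ne hy with rfl | h
  · exact Or.inl rfl
  · exact Or.inr h

lemma mkernelPow_nonneg (n : ℕ) (x y : V) : 0 ≤ mkernelPow Γ.wV Γ.wE n x y := by
  induction n generalizing x with
  | zero => simp only [mkernelPow]; split_ifs <;> norm_num
  | succ n ih =>
    simp only [mkernelPow]
    exact tsum_nonneg fun z => mul_nonneg (Γ.mkernel_nonneg x z) (ih z)

lemma mkernelPow_zero (n : ℕ) (x y : V) (h : n < Γ.G.dist x y) :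
    mkernelPow Γ.wV Γ.wE n x y = 0 := by
  induction n generalizing x with
  | zero =>
    simp only [mkernelPow]
    rw [if_neg]
    rintro rfl
    simp at h
  | succ n ih =>
    simp only [mkernelPow]
    refine (tsum_congr fun z => ?_).trans tsum_zero
    by_cases hz : mkernel Γ.wV Γ.wE x z = 0
    · rw [hz, zero_mul]
    · have h1 := Γ.mkernel_dist hz
      have h2 := Γ.connected.dist_triangle (u := x) (v := z) (w := y)
      rw [ih z (by omega), mul_zero]

lemma mkernel_laplace {Cc : ℝ} (hctrl : Γ.Controlled Cc) (S : Finset V) (g : V → ℝ) (z : V)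
    (h1 : ∀ y, y ∉ S → g y = 0) (h2 : ∀ y, y ∉ S → Γ.wE z y ≠ 0 → g z = 0) :
    ∑' w, mkernel Γ.wV Γ.wE z w * g w
      = g z + (∑ y ∈ S, Γ.wE z y * (g y - g z)) / Γ.wV z := by
  classical
  set T : Finset V := insert z ((Γ.nbr_finite hctrl z).toFinset ∪ S) with hT
  have hST : S ⊆ T := fun y hy => by simp [hT, hy]
  have hzT : z ∈ T := by simp [hT]
  have hwE : ∀ y, y ∉ T → Γ.wE z y = 0 := by
    intro y hy
    by_contra hc
    exact hy (by simp [hT, hc])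
  have hK : ∀ y, y ∉ T → mkernel Γ.wV Γ.wE z y * g y = 0 := by
    intro y hy
    by_contra hc
    rcases Γ.mkernel_ne (left_ne_zero_of_mul hc) with rfl | h
    · exact hy hzT
    · exact h (hwE y hy)
  rw [tsum_eq_sum (s := T) (fun y hy => hK y hy)]
  have hsum : ∑' y, Γ.wE z y = ∑ y ∈ T, Γ.wE z y := tsum_eq_sum (fun y hy => hwE y hy)
  have hpt : ∀ w, mkernel Γ.wV Γ.wE z w * g w =
      (if z = w then (1 - (∑ y ∈ T, Γ.wE z y) / Γ.wV z) * g z else 0)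
        + Γ.wE z w * g w / Γ.wV z := by
    intro w
    unfold mkernel
    rw [hsum]
    split_ifs with h
    · subst h
      rw [Γ.wE_self]; simp
    · ring
  rw [Finset.sum_congr rfl (fun w _ => hpt w), Finset.sum_add_distrib, Finset.sum_ite_eq,
    if_pos hzT, ← Finset.sum_div]
  have hTS : ∑ y ∈ S, Γ.wE z y * (g y - g z) = ∑ y ∈ T, Γ.wE z y * (g y - g z) := by
    refine Finset.sum_subset hST fun y _ hy => ?_
    by_cases hc : Γ.wE z y = 0
    · rw [hc, zero_mul]
    · rw [h1 y hy, h2 y hy hc]; simp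
  have hexp : ∑ y ∈ T, Γ.wE z y * (g y - g z)
      = ∑ y ∈ T, Γ.wE z y * g y - (∑ y ∈ T, Γ.wE z y) * g z := by
    rw [Finset.sum_mul, ← Finset.sum_sub_distrib]
    exact Finset.sum_congr rfl fun y _ => by ring
  rw [hTS, hexp]
  ring

lemma evolve {Cc : ℝ} (hctrl : Γ.Controlled Cc) (S0 : Finset V) (f : V → ℝ) (s : ℕ) (z : V) :
    ∑ y ∈ S0, mkernelPow Γ.wV Γ.wE (s + 1) z y * f y
      = ∑' w, mkernel Γ.wV Γ.wE z w * ∑ y ∈ S0, mkernelPow Γ.wV Γ.wE s w y * f y := by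
  have hfin := Γ.mkernel_finite hctrl z
  have hz : ∀ w, w ∉ hfin.toFinset → mkernel Γ.wV Γ.wE z w = 0 := by
    intro w hw
    by_contra hc
    exact hw (by simpa using hc)
  rw [tsum_eq_sum (s := hfin.toFinset) (fun w hw => by rw [hz w hw, zero_mul])]
  simp only [mkernelPow, Finset.mul_sum]
  rw [Finset.sum_comm]
  refine Finset.sum_congr rfl fun y _ => ?_
  rw [tsum_eq_sum (s := hfin.toFinset) (fun w hw => by rw [hz w hw, zero_mul]), Finset.sum_mul]
  exact Finset.sum_congr rfl fun w _ => by ring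

open Classical in
lemma fk_apply {Λ : V → ℝ → ℝ → ℝ} (hfk : Γ.IsRelFK Λ) (x : V) (r : ℝ) (S : Finset V)
    (ν : ℝ) (f : V → ℝ) (hf : ∀ z, f z ≠ 0 → (Γ.G.dist x z : ℝ) ≤ r)
    (hS : ∀ z, f z ≠ 0 → z ∈ S ∧ ∀ y, Γ.wE z y ≠ 0 → y ∈ S)
    (hν : ∑ z ∈ S with f z ≠ 0, Γ.wV z ≤ ν) :
    Λ x r ν * ∑ z ∈ S, f z ^ 2 * Γ.wV z
      ≤ (∑ x ∈ S, ∑ y ∈ S, (f x - f y) ^ 2 * Γ.wE x y) / 2 := by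
  set Ω : Finset V := S.filter fun z => f z ≠ 0 with hΩ
  have hRHS : 0 ≤ (∑ x ∈ S, ∑ y ∈ S, (f x - f y) ^ 2 * Γ.wE x y) / 2 := by
    refine div_nonneg (Finset.sum_nonneg fun a _ => Finset.sum_nonneg fun b _ => ?_) (by norm_num)
    exact mul_nonneg (sq_nonneg _) (Γ.wE_nonneg _ _)
  rcases Ω.eq_empty_or_nonempty with hem | hne
  · have : ∑ z ∈ S, f z ^ 2 * Γ.wV z = 0 := by
      refine Finset.sum_eq_zero fun z hz => ?_
      by_cases hc : f z = 0
      · simp [hc]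
      · have : z ∈ Ω := by rw [hΩ, Finset.mem_filter]; exact ⟨hz, hc⟩
        rw [hem] at this
        simp at this
    rw [this, mul_zero]
    exact hRHS
  have hmem : ∀ z, z ∈ Ω ↔ f z ≠ 0 := by
    intro z
    rw [hΩ, Finset.mem_filter]
    exact ⟨fun h => h.2, fun h => ⟨(hS z h).1, h⟩⟩
  have hfS : ∀ z, z ∉ S → f z = 0 := by
    intro z hz
    by_contra hc
    exact hz (hS z hc).1
  have hsq : Γ.sqnorm f = ∑ z ∈ S, f z ^ 2 * Γ.wV z := by
    unfold sqnorm
    exact tsum_eq_sum fun z hz => by rw [hfS z hz]; simp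
  have hin : ∀ x y, y ∉ S → (f x - f y) ^ 2 * Γ.wE x y = 0 := by
    intro x y hy
    rw [hfS y hy]
    by_cases hc : f x = 0
    · simp [hc]
    · have : Γ.wE x y = 0 := by
        by_contra hw
        exact hy ((hS x hc).2 y hw)
      simp [this]
  have hen : Γ.energy f = (∑ x ∈ S, ∑ y ∈ S, (f x - f y) ^ 2 * Γ.wE x y) / 2 := by
    unfold energy
    congr 1
    have h1 : ∀ x, ∑' y, (f x - f y) ^ 2 * Γ.wE x y = ∑ y ∈ S, (f x - f y) ^ 2 * Γ.wE x y :=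
      fun x => tsum_eq_sum fun y hy => hin x y hy
    simp only [h1]
    refine tsum_eq_sum fun x hx => Finset.sum_eq_zero fun y _ => ?_
    have := hin y x hx
    rw [Γ.wE_symm x y]
    rw [← this]; ring
  have hνΩ : 0 < ∑ z ∈ Ω, Γ.wV z := Finset.sum_pos (fun z _ => Γ.wV_pos z) hne
  have h1 := hfk.1 x r _ _ hνΩ hν
  have h2 := hfk.2 x r Ω hne (fun z hz => hf z ((hmem z).1 hz))
  have h3 : Γ.lambda1 Ω ≤ Γ.energy f / Γ.sqnorm f := by
    refine csInf_le ⟨0, ?_⟩ ⟨f, ?_, fun z hz => (hmem z).2 hz, rfl⟩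
    · rintro q ⟨g, _, _, rfl⟩
      refine div_nonneg (div_nonneg ?_ (by norm_num)) ?_
      · exact tsum_nonneg fun a => tsum_nonneg fun b =>
          mul_nonneg (sq_nonneg _) (Γ.wE_nonneg _ _)
      · exact tsum_nonneg fun a => mul_nonneg (sq_nonneg _) (Γ.wV_pos a).le
    · obtain ⟨z, hz⟩ := hne
      intro h0
      exact (hmem z).1 hz (by rw [h0]; rfl)
  have hpos : 0 < ∑ z ∈ S, f z ^ 2 * Γ.wV z := by
    obtain ⟨z, hz⟩ := hne
    have hfz := (hmem z).1 hz
    refine Finset.sum_pos' (fun a _ => mul_nonneg (sq_nonneg _) (Γ.wV_pos a).le)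
      ⟨z, (hS z hfz).1, mul_pos (by positivity) (Γ.wV_pos z)⟩
  have h4 := h1.trans (h2.trans h3)
  rw [hsq, hen, le_div_iff₀ hpos] at h4
  exact h4

end WeightedGraph

/-- **Claim (Gaussian-weighted L² bound for the heat kernel).**
Let `(Γ, wV, wE)` be a weighted graph with controlled and uniformly lazy weights
admitting a relative Faber-Krahn function `Λ(B(z,r),ν) = (a/r²)(F(z,r)/ν)^α`.  With
`E_D(k,x) = ∑_w p(k,x,w)² exp(ρ(x,w)²/(Dk)) π(w)` and `ρ(x,w) = max{1, d(x,w)}`, there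
is `D₀ > 0` such that for every `D ≥ D₀` there is a constant `C(D)` with
`E_D(k,x) ≤ C(D)/F(x,√(2k))` for all `x` and all integers `k ≥ 1`. -/
theorem gaussian_weighted_l2_bound {V : Type*} [Countable V]
    (Γ : WeightedGraph V) (Cc Ce : ℝ)
    (hctrl : Γ.Controlled Cc) (hlazy : Γ.UniformlyLazy Ce)
    (F : V → ℝ → ℝ) (hF : ∀ z : V, ∀ r : ℝ, 0 < r → 0 < F z r)
    (a α : ℝ) (ha : 0 < a) (hα : 0 < α)
    (hfk : Γ.IsRelFK (fun z r ν => (a / r ^ 2) * (F z r / ν) ^ α)) :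
    ∃ D₀ : ℝ, 0 < D₀ ∧ ∀ D : ℝ, D₀ ≤ D → ∃ C : ℝ, 0 < C ∧
      ∀ x : V, ∀ k : ℕ, 1 ≤ k →
        (∑' w, Γ.heatKernel k x w ^ 2 *
            Real.exp ((max 1 (Γ.G.dist x w : ℝ)) ^ 2 / (D * (k : ℝ))) * Γ.wV w)
          ≤ C / F x (Real.sqrt (2 * (k : ℝ))) := by
  classical
  obtain ⟨⟨he, he1⟩, hlz⟩ := hlazy
  obtain ⟨C, hC, hmv⟩ := mean_value Γ.wE Γ.wV Ce a α he he1 ha hα Γ.wE_symm Γ.wE_nonneg Γ.wV_pos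
  set D' : ℝ := 36 / Ce with hD'
  have hD'0 : 0 < D' := by positivity
  have hD'6 : 6 ≤ D' := by
    rw [hD', le_div_iff₀ he]; linarith
  refine ⟨2 * D', by positivity, ?_⟩
  intro D hD
  have hD0 : 0 < D := by linarith
  refine ⟨C * Real.exp (2 / D'), by positivity, ?_⟩
  intro x k hk
  have hk1 : (1 : ℝ) ≤ k := by exact_mod_cast hk
  have hk0 : (0 : ℝ) < k := by linarith
  set r : ℝ := Real.sqrt (2 * (k : ℝ)) with hr
  have hr0 : 0 < r := Real.sqrt_pos.mpr (by positivity)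
  have hr2 : r ^ 2 = 2 * k := Real.sq_sqrt (by positivity)
  have hFx := hF x r hr0
  set ρ : V → ℝ := fun w => max 1 (Γ.G.dist x w : ℝ) with hρ
  have hρ1 : ∀ w, 1 ≤ ρ w := fun w => le_max_left _ _
  set S0 : Finset V := (Γ.ball_finite hctrl x k).toFinset with hS0
  have hS0m : ∀ w, w ∈ S0 ↔ Γ.G.dist x w ≤ k := by intro w; simp [hS0]
  set S : Finset V := (Γ.ball_finite hctrl x (3 * k + 5)).toFinset with hS
  have hSm : ∀ w, w ∈ S ↔ Γ.G.dist x w ≤ 3 * k + 5 := by intro w; simp [hS]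
  have hS0S : S0 ⊆ S := fun w hw => by rw [hS0m] at hw; rw [hSm]; omega
  set K := mkernelPow Γ.wV Γ.wE with hK
  have hKz : ∀ w, w ∉ S0 → K k x w = 0 := by
    intro w hw
    rw [hS0m] at hw
    exact Γ.mkernelPow_zero k x w (by omega)
  have hheat : ∀ w, Γ.heatKernel k x w = K k x w / Γ.wV w := fun w => rfl
  set E : ℝ := ∑ w ∈ S0, Γ.heatKernel k x w ^ 2 * Real.exp (ρ w ^ 2 / (2 * D' * k)) * Γ.wV w
    with hE
  have hle : (∑' w, Γ.heatKernel k x w ^ 2 *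
      Real.exp ((max 1 (Γ.G.dist x w : ℝ)) ^ 2 / (D * (k : ℝ))) * Γ.wV w) ≤ E := by
    rw [tsum_eq_sum (s := S0) (fun w hw => by rw [hheat, hKz w hw]; simp)]
    refine Finset.sum_le_sum fun w _ => ?_
    have := Γ.wV_pos w
    gcongr
  refine hle.trans ?_
  by_cases hEpos : E ≤ 0
  · refine hEpos.trans ?_
    positivity
  push Not at hEpos
  set f : V → ℝ := fun w => Γ.heatKernel k x w * Real.exp (ρ w ^ 2 / (2 * D' * k)) with hf
  set u : ℕ → V → ℝ := fun s z => ∑ y ∈ S0, K s z y * f y with hu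
  have hukx : u k x = E := by
    rw [hE]
    refine Finset.sum_congr rfl fun w _ => ?_
    simp only [hf]
    rw [hheat]
    have := Γ.wV_pos w
    field_simp
  have huz : ∀ s z, k + s < Γ.G.dist x z → u s z = 0 := by
    intro s z hz
    refine Finset.sum_eq_zero fun y hy => ?_
    rw [hS0m] at hy
    have h1 := Γ.connected.dist_triangle (u := x) (v := y) (w := z)
    rw [SimpleGraph.dist_comm (u := y)] at h1
    have h2 : K s z y = 0 := Γ.mkernelPow_zero s z y (by omega)
    rw [h2, zero_mul]
  have hu0 : ∀ z, u 0 z = if z ∈ S0 then f z else 0 := by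
    intro z
    simp only [hu, hK, mkernelPow, ite_mul, one_mul, zero_mul]
    rw [Finset.sum_ite_eq]
  have hev : ∀ s, s < k → ∀ z ∈ S,
      u (s + 1) z = u s z + (∑ y ∈ S, Γ.wE z y * (u s y - u s z)) / Γ.wV z := by
    intro s hs z _
    have h1 : u (s + 1) z = ∑' w, mkernel Γ.wV Γ.wE z w * u s w := Γ.evolve hctrl S0 f s z
    rw [h1]
    refine Γ.mkernel_laplace hctrl S (u s) z ?_ ?_
    · intro y hy
      rw [hSm] at hy
      exact huz s y (by omega)
    · intro y hy hzy
      rw [hSm] at hy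
      have h2 := Γ.dist_le_one_of_wE hzy
      have h3 := Γ.connected.dist_triangle (u := x) (v := z) (w := y)
      exact huz s z (by omega)
  have hrow : ∀ z, ∑ y ∈ S, Γ.wE z y ≤ (1 - Ce) * Γ.wV z := fun z =>
    ((Γ.wE_summable z).sum_le_tsum S (fun y _ => Γ.wE_nonneg z y)).trans (hlz z)
  have hdist : ∀ y z, Γ.wE y z ≠ 0 → |(Γ.G.dist x y : ℝ) - (Γ.G.dist x z : ℝ)| ≤ 1 := by
    intro y z hyz
    have h1 := Γ.dist_le_one_of_wE hyz
    have h2 := Γ.connected.dist_triangle (u := x) (v := y) (w := z)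
    have h3 := Γ.connected.dist_triangle (u := x) (v := z) (w := y)
    rw [SimpleGraph.dist_comm (u := z)] at h3
    have h4 : (Γ.G.dist x z : ℝ) ≤ Γ.G.dist x y + 1 := by
      exact_mod_cast (by omega : Γ.G.dist x z ≤ Γ.G.dist x y + 1)
    have h5 : (Γ.G.dist x y : ℝ) ≤ Γ.G.dist x z + 1 := by
      exact_mod_cast (by omega : Γ.G.dist x y ≤ Γ.G.dist x z + 1)
    rw [abs_le]
    constructor <;> linarith
  have hρd : ∀ y z, Γ.wE y z ≠ 0 → |ρ y - ρ z| ≤ 1 := by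
    intro y z hyz
    simp only [hρ]
    refine (abs_max_sub_max_le_max _ _ _ _).trans ?_
    rw [sub_self, abs_zero, max_eq_right (abs_nonneg _)]
    exact hdist y z hyz
  -- integrated maximum principle
  set g : ℕ → V → ℝ := fun s z => Real.exp (-(ρ z ^ 2 / (D' * (2 * k - s)))) with hg
  have hmax : ∀ s, s ≤ k → ∑ z ∈ S, u s z ^ 2 * g s z * Γ.wV z ≤ E := by
    intro s
    induction s with
    | zero =>
      intro _
      refine le_of_eq ?_
      rw [hE, ← Finset.sum_subset hS0S (fun z _ hz => by rw [hu0, if_neg hz]; simp)]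
      refine Finset.sum_congr rfl fun z hz => ?_
      rw [hu0, if_pos hz]
      simp only [hf, hg]
      have h1 : (Γ.heatKernel k x z * Real.exp (ρ z ^ 2 / (2 * D' * k))) ^ 2
          = Γ.heatKernel k x z ^ 2 * Real.exp (ρ z ^ 2 / (2 * D' * k))
            * Real.exp (ρ z ^ 2 / (2 * D' * k)) := by ring
      have h2 : Real.exp (ρ z ^ 2 / (2 * D' * k))
          * Real.exp (-(ρ z ^ 2 / (D' * (2 * k - (0 : ℕ))))) = 1 := by
        rw [← Real.exp_add, Real.exp_eq_one_iff]
        push_cast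
        rw [sub_zero]
        ring_nf
      rw [h1, mul_assoc (Γ.heatKernel k x z ^ 2 * _), h2, mul_one]
    | succ s ih =>
      intro hs
      refine le_trans ?_ (ih (by omega))
      have hsk : (s : ℝ) + 1 ≤ k := by exact_mod_cast hs
      set T : ℝ := 2 * k - (s + 1) with hT
      have hT1 : 1 ≤ T := by linarith
      have hTk : k ≤ T := by linarith
      have hg1 : ∀ z, g (s + 1) z = Real.exp (-(ρ z ^ 2 / (D' * T))) := by
        intro z; simp only [hg]; push_cast; rw [hT]
      have hg2 : ∀ z, g s z = Real.exp (-(ρ z ^ 2 / (D' * (T + 1)))) := by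
        intro z; simp only [hg]; rw [hT]; congr 4; ring
      refine step_max S Γ.wE Γ.wV Ce he Γ.wE_symm Γ.wE_nonneg Γ.wV_pos hrow (u s) (u (s + 1))
        (g (s + 1)) (g s) (fun z => 18 * ρ z ^ 2 / (D' ^ 2 * T ^ 2)) (fun z => Real.exp_pos _)
        (hev s (by omega)) (fun z => by positivity) ?_ ?_
      · intro z _ hz y _ hzy
        rw [hg1, hg1]
        refine gauss_scalar1 D' T (ρ z) (ρ y) hD'6 hT1 (hρ1 z) ?_ (hρd z y hzy)
        refine max_le (by linarith) ?_
        have h1 : Γ.G.dist x z ≤ k + s := by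
          by_contra hc
          exact hz (huz s z (by omega))
        have h2 : (Γ.G.dist x z : ℝ) ≤ k + s := by exact_mod_cast h1
        linarith
      · intro z _ _
        rw [hg1, hg2]
        exact gauss_scalar2 D' T (ρ z) Ce he hD' hT1
  have hMs : ∀ s, s ≤ k → ∑ z ∈ S with (Γ.G.dist x z : ℝ) ≤ r, u s z ^ 2 * Γ.wV z
      ≤ Real.exp (2 / D') * E := by
    intro s hs
    have hsk : (s : ℝ) ≤ k := by exact_mod_cast hs
    refine le_trans ?_ (mul_le_mul_of_nonneg_left (hmax s hs) (Real.exp_pos _).le)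
    rw [Finset.mul_sum, Finset.sum_filter]
    refine Finset.sum_le_sum fun z _ => ?_
    have hwz := Γ.wV_pos z
    have hgz : 0 < g s z := Real.exp_pos _
    split_ifs with hz
    · have h1 : ρ z ^ 2 ≤ 2 * k := by
        rcases max_choice 1 (Γ.G.dist x z : ℝ) with h | h
        · simp only [hρ]; rw [h]; linarith
        · simp only [hρ]; rw [h, ← hr2]
          exact pow_le_pow_left₀ (by positivity) hz 2
      have h2 : 1 ≤ Real.exp (2 / D') * g s z := by
        simp only [hg]
        rw [← Real.exp_add]
        apply Real.one_le_exp
        have h3 : ρ z ^ 2 / (D' * (2 * k - s)) ≤ 2 / D' := by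
          rw [div_le_div_iff₀ (mul_pos hD'0 (by linarith)) hD'0]
          nlinarith
        linarith
      have h4 : 0 ≤ u s z ^ 2 * Γ.wV z := by positivity
      nlinarith [mul_le_mul_of_nonneg_left h2 h4]
    · positivity
  have hr2k : r ≤ 2 * k := by
    rw [hr, Real.sqrt_le_left (by positivity)]
    nlinarith
  have hfin := hmv S hrow (fun z => (Γ.G.dist x z : ℝ)) hdist u k hk hev r (F x r)
    (Real.exp (2 / D') * E) hr0 hr2 hFx (by positivity)
    (by
      intro ν _ φ hφ hφν
      refine Γ.fk_apply hfk x r S ν φ hφ ?_ hφν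
      intro z hz
      have h1 : (Γ.G.dist x z : ℝ) ≤ 2 * k := (hφ z hz).trans hr2k
      have h2 : Γ.G.dist x z ≤ 2 * k := by exact_mod_cast h1
      refine ⟨(hSm z).2 (by omega), fun y hy => ?_⟩
      have h3 := Γ.dist_le_one_of_wE hy
      have h4 := Γ.connected.dist_triangle (u := x) (v := z) (w := y)
      exact (hSm y).2 (by omega))
    hMs x ((hSm x).2 (by simp)) (by simp) (by rw [hukx]; exact hEpos.le)
  rw [hukx] at hfin
  refine le_of_mul_le_mul_right ?_ hEpos
  calc E * E = E ^ 2 := by ring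
    _ ≤ _ := hfin
    _ = _ := by ring
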